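/- arXiv:1403.4480 — 2 statements merged into one kernel-verified Lean document; each statement's English description precedes it below -/
import Mathlib

section
/- Let X be a monotonically retractable space. Then every countably compact subset A of X is closed in X. -/
/-- ω-monotone assignment. -/
def OmegaMonotone {X Y : Type*} (N : Set X → Set Y) : Prop :=
  (∀ A : Set X, A.Countable → (N A).Countable) ∧
  (∀ A B : Set X, A.Countable → B.Countable → A ⊆ B → N A ⊆ N B) ∧
  (∀ u : ℕ → Set X, (∀ n, (u n).Countable) → (∀ n, u n ⊆ u (n + 1)) →
    N (⋃ n, u n) = ⋃ n, N (u n))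

/-- A space is monotonically retractable. -/
def MonotonicallyRetractable (X : Type*) [TopologicalSpace X] : Prop :=
  ∃ (r : Set X → X → X) (N : Set X → Set (Set X)),
    OmegaMonotone N ∧
    ∀ A : Set X, A.Countable →
      Continuous (r A) ∧ r A ∘ r A = r A ∧ A ⊆ Set.range (r A) ∧
      (∀ U : Set X, IsOpen U → ∃ M ⊆ N A, (r A) ⁻¹' U = ⋃₀ M)

/-- A subset is countably compact: every countable open cover has a finite
subcover. -/
def IsCountablyCompactSet {X : Type*} [TopologicalSpace X] (S : Set X) : Prop :=
  ∀ U : ℕ → Set X, (∀ n, IsOpen (U n)) → S ⊆ ⋃ n, U n →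
    ∃ t : Finset ℕ, S ⊆ ⋃ n ∈ t, U n

theorem countablyCompact_subset_of_monotonicallyRetractable_isClosed
    {X : Type*} [TopologicalSpace X] [T2Space X]
    (hX : MonotonicallyRetractable X)
    (A : Set X) (hA : IsCountablyCompactSet A) :
    IsClosed A := by
  classical
  obtain ⟨r, N, ⟨hNc, -, hNu⟩, hr⟩ := hX
  refine isClosed_of_closure_subset fun x hx => ?_
  by_contra hxA
  -- choose a point of `A` in each set that meets `A`
  have hpick : ∀ M : Set X, ∃ p : X, (M ∩ A).Nonempty → p ∈ M ∩ A := by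
    intro M
    by_cases h : (M ∩ A).Nonempty
    · exact ⟨h.choose, fun _ => h.choose_spec⟩
    · exact ⟨x, fun h' => absurd h' h⟩
  choose pick hpick using hpick
  let u : ℕ → Set X := fun n => Nat.rec {x} (fun _ B => B ∪ pick '' N B) n
  have hu0 : u 0 = {x} := rfl
  have hus : ∀ n, u (n + 1) = u n ∪ pick '' N (u n) := fun n => rfl
  have huc : ∀ n, (u n).Countable := by
    intro n
    induction n with
    | zero => rw [hu0]; exact Set.countable_singleton x
    | succ n ih => rw [hus]; exact ih.union ((hNc _ ih).image _)
  have hum : ∀ n, u n ⊆ u (n + 1) := fun n => by rw [hus]; exact Set.subset_union_left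
  have hNB := hNu u huc hum
  set B : Set X := ⋃ n, u n with hB
  have hBc : B.Countable := Set.countable_iUnion huc
  have hpB : ∀ M ∈ N B, pick M ∈ B := by
    intro M hM
    rw [hNB] at hM
    obtain ⟨n, hn⟩ := Set.mem_iUnion.1 hM
    refine Set.mem_iUnion.2 ⟨n + 1, ?_⟩
    rw [hus]
    exact Or.inr ⟨M, hn, rfl⟩
  obtain ⟨hcont, hidem, hsub, hnet⟩ := hr B hBc
  have hxB : x ∈ B := Set.mem_iUnion.2 ⟨0, by rw [hu0]; rfl⟩
  have hfix : ∀ b ∈ B, r B b = b := by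
    intro b hb
    obtain ⟨y, rfl⟩ := hsub hb
    exact congrFun hidem y
  have hnet' : ∀ (U : Set X) (a : X), IsOpen U → r B a ∈ U →
      ∃ M ∈ N B, a ∈ M ∧ M ⊆ r B ⁻¹' U := by
    intro U a hU ha
    obtain ⟨S, hS, hSU⟩ := hnet U hU
    have ha' : a ∈ ⋃₀ S := hSU ▸ ha
    obtain ⟨M, hM, haM⟩ := ha'
    exact ⟨M, hS hM, haM, hSU ▸ Set.subset_sUnion_of_mem hM⟩
  set F : Set X := {y | r B y = y} with hF
  have hFc : IsClosed F := isClosed_eq hcont continuous_id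
  have hxK : x ∈ closure (A ∩ F) := by
    rw [mem_closure_iff]
    intro U hU hxU
    obtain ⟨a, haU, haA⟩ := mem_closure_iff.1 hx (r B ⁻¹' U) (hU.preimage hcont)
      (by simpa [hfix x hxB] using hxU)
    obtain ⟨M, hM, haM, hMU⟩ := hnet' U a hU haU
    have hp := hpick M ⟨a, haM, haA⟩
    have hpf := hfix _ (hpB M hM)
    refine ⟨pick M, ?_, hp.2, hpf⟩
    have := hMU hp.1
    rwa [Set.mem_preimage, hpf] at this
  -- the countable cover
  let P : Set X → Set X → Prop := fun M U => IsOpen U ∧ M ∩ F ⊆ U ∧ x ∉ closure (U ∩ F)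
  have hW : ∀ M : Set X, ∃ W : Set X, IsOpen W ∧ x ∉ closure (W ∩ F) ∧
      ((∃ U, P M U) → M ∩ F ⊆ W) := by
    intro M
    by_cases h : ∃ U, P M U
    · obtain ⟨U, h1, h2, h3⟩ := h
      exact ⟨U, h1, h3, fun _ => h2⟩
    · exact ⟨∅, isOpen_empty, by simp, fun h' => absurd h' h⟩
  choose W hWo hWx hWs using hW
  obtain ⟨f, hf⟩ := (((hNc B hBc).image W).insert Fᶜ).exists_eq_range (Set.insert_nonempty _ _)
  have hfm : ∀ n, IsOpen (f n) ∧ x ∉ closure (f n ∩ F) := by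
    intro n
    have : f n ∈ insert Fᶜ (W '' N B) := hf ▸ Set.mem_range_self n
    rcases this with h | ⟨M, -, h⟩
    · rw [h]
      exact ⟨hFc.isOpen_compl, by simp⟩
    · rw [← h]
      exact ⟨hWo M, hWx M⟩
  have hcover : A ⊆ ⋃ n, f n := by
    intro a ha
    suffices h : ∃ V ∈ insert Fᶜ (W '' N B), a ∈ V by
      obtain ⟨V, hV, haV⟩ := h
      rw [hf] at hV
      obtain ⟨n, rfl⟩ := hV
      exact Set.mem_iUnion.2 ⟨n, haV⟩
    by_cases haF : a ∈ F
    · have hne : a ≠ x := fun h => hxA (h ▸ ha)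
      obtain ⟨U, V, hU, hV, haU, hxV, hUV⟩ := t2_separation hne
      have haF' : r B a = a := haF
      obtain ⟨M, hM, haM, hMU⟩ := hnet' U a hU (by rwa [haF'])
      refine ⟨W M, Or.inr ⟨M, hM, rfl⟩, hWs M ⟨U, hU, ?_, ?_⟩ ⟨haM, haF⟩⟩
      · rintro y ⟨hyM, hyF⟩
        have h1 := hMU hyM
        have hyF' : r B y = y := hyF
        rwa [Set.mem_preimage, hyF'] at h1
      · intro hcl
        obtain ⟨z, hzV, hzU, -⟩ := mem_closure_iff.1 hcl V hV hxV
        exact Set.disjoint_left.1 hUV hzU hzV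
    · exact ⟨Fᶜ, Or.inl rfl, haF⟩
  obtain ⟨t, ht⟩ := hA f (fun n => (hfm n).1) hcover
  have hK : A ∩ F ⊆ ⋃ n ∈ t, (f n ∩ F) := by
    rintro y ⟨hyA, hyF⟩
    obtain ⟨n, hn, hy⟩ := Set.mem_iUnion₂.1 (ht hyA)
    exact Set.mem_iUnion₂.2 ⟨n, hn, hy, hyF⟩
  have hx2 := closure_mono hK hxK
  rw [Finset.closure_biUnion] at hx2
  obtain ⟨n, -, hn⟩ := Set.mem_iUnion₂.1 hx2
  exact (hfm n).2 hn
end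

section
/- Every Corson compact space is monotonically retractable, and conversely every monotonically retractable compact Hausdorff space is Corson; i.e., a compact Hausdorff space is monotonically retractable if and only if it is Corson. -/
/-- A compact space is Corson if it embeds into a Σ-product of real lines:
there is a continuous injection into some `Γ → ℝ` whose values have countable
support. (A continuous injection from a compact space into a Hausdorff space is
automatically an embedding.) -/
def IsCorsonCompact (K : Type u) [TopologicalSpace K] : Prop :=
  ∃ (Γ : Type u) (f : K → Γ → ℝ), Continuous f ∧ Function.Injective f ∧
    ∀ x : K, {γ : Γ | f x γ ≠ 0}.Countable

section
open Set

/-- closure of a set under a finitary set-valued operation -/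
def fcl {α : Type*} (ψ : Finset α → Set α) (S : Set α) : Set α :=
  ⋂₀ {T | S ⊆ T ∧ ∀ F : Finset α, (F : Set α) ⊆ T → ψ F ⊆ T}

theorem subset_fcl {α : Type*} (ψ : Finset α → Set α) (S : Set α) : S ⊆ fcl ψ S :=
  fun _ hx _ hT => hT.1 hx

theorem fcl_closed {α : Type*} (ψ : Finset α → Set α) (S : Set α) (F : Finset α)
    (hF : (F : Set α) ⊆ fcl ψ S) : ψ F ⊆ fcl ψ S :=
  fun _ hx T hT => hT.2 F (fun _ hy => hF hy T hT) hx

theorem fcl_min {α : Type*} (ψ : Finset α → Set α) {S T : Set α} (h : S ⊆ T)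
    (hT : ∀ F : Finset α, (F : Set α) ⊆ T → ψ F ⊆ T) : fcl ψ S ⊆ T :=
  fun _ hx => hx T ⟨h, hT⟩

theorem fcl_mono {α : Type*} (ψ : Finset α → Set α) {S T : Set α} (h : S ⊆ T) :
    fcl ψ S ⊆ fcl ψ T :=
  fcl_min ψ (h.trans (subset_fcl ψ T)) (fcl_closed ψ T)

theorem finset_dir {α : Type*} {u : ℕ → Set α} (hu : Monotone u) (F : Finset α)
    (hF : (F : Set α) ⊆ ⋃ n, u n) : ∃ n, (F : Set α) ⊆ u n := by
  classical
  induction F using Finset.induction_on with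
  | empty => exact ⟨0, by simp⟩
  | insert a s ha ih =>
    rw [Finset.coe_insert, insert_subset_iff] at hF
    obtain ⟨n, hn⟩ := ih hF.2
    obtain ⟨m, hm⟩ := mem_iUnion.1 hF.1
    refine ⟨max n m, ?_⟩
    rw [Finset.coe_insert, insert_subset_iff]
    exact ⟨hu (le_max_right _ _) hm, hn.trans (hu (le_max_left _ _))⟩

theorem countable_finsets {α : Type*} {S : Set α} (hS : S.Countable) :
    {F : Finset α | (F : Set α) ⊆ S}.Countable := by
  have h := Set.countable_ofPred_finite_subset hS
  have : {F : Finset α | (F : Set α) ⊆ S} ⊆ (fun F : Finset α => (F : Set α)) ⁻¹' {t | t.Finite ∧ t ⊆ S} :=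
    fun F hF => ⟨F.finite_toSet, hF⟩
  exact (h.preimage_of_injOn (Finset.coe_injective.injOn)).mono this

theorem fcl_countable {α : Type*} (ψ : Finset α → Set α) (hψ : ∀ F, (ψ F).Countable)
    {S : Set α} (hS : S.Countable) : (fcl ψ S).Countable := by
  let E : ℕ → Set α := fun n => Nat.rec S (fun _ T => T ∪ ⋃ F ∈ {F : Finset α | (F : Set α) ⊆ T}, ψ F) n
  have hE : ∀ n, E (n+1) = E n ∪ ⋃ F ∈ {F : Finset α | (F : Set α) ⊆ E n}, ψ F := fun n => rfl
  have hc : ∀ n, (E n).Countable := by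
    intro n
    induction n with
    | zero => exact hS
    | succ n ih =>
      rw [hE]
      exact ih.union ((countable_finsets ih).biUnion fun F _ => hψ F)
  have hm : Monotone E := monotone_nat_of_le_succ fun n => by rw [hE]; exact subset_union_left
  refine (countable_iUnion hc).mono (fcl_min ψ (subset_iUnion E 0) ?_)
  intro F hF
  obtain ⟨n, hn⟩ := finset_dir hm F hF
  refine Subset.trans ?_ (subset_iUnion E (n+1))
  rw [hE]
  exact subset_union_of_subset_right (subset_biUnion_of_mem (u := fun F => ψ F) hn) _

theorem finset_fcl {α : Type*} (ψ : Finset α → Set α) (S : Set α) (F : Finset α)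
    (hF : (F : Set α) ⊆ ⋃ G ∈ {G : Finset α | (G : Set α) ⊆ S}, fcl ψ (G : Set α)) :
    ∃ G : Finset α, (G : Set α) ⊆ S ∧ (F : Set α) ⊆ fcl ψ (G : Set α) := by
  classical
  induction F using Finset.induction_on with
  | empty => exact ⟨∅, by simp, by simp⟩
  | insert a s ha ih =>
    rw [Finset.coe_insert, insert_subset_iff] at hF
    obtain ⟨G, hG, hn⟩ := ih hF.2
    obtain ⟨G', hG', hm⟩ := mem_iUnion₂.1 hF.1
    refine ⟨G ∪ G', by rw [Finset.coe_union]; exact union_subset hG hG', ?_⟩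
    rw [Finset.coe_insert, insert_subset_iff, Finset.coe_union]
    exact ⟨fcl_mono ψ subset_union_right hm, hn.trans (fcl_mono ψ subset_union_left)⟩

theorem fcl_finitary {α : Type*} (ψ : Finset α → Set α) (S : Set α) :
    fcl ψ S ⊆ ⋃ G ∈ {G : Finset α | (G : Set α) ⊆ S}, fcl ψ (G : Set α) := by
  refine fcl_min ψ ?_ ?_
  · intro x hx
    refine mem_iUnion₂.2 ⟨{x}, by simpa using hx, subset_fcl _ _ (by simp)⟩
  · intro F hF
    obtain ⟨G, hG, h⟩ := finset_fcl ψ S F hF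
    exact (fcl_closed ψ _ F h).trans (subset_biUnion_of_mem (u := fun G : Finset α => fcl ψ (G : Set α)) hG)

theorem finset_fcl' {α : Type*} (ψ : Finset α → Set α) (S : Set α) (F : Finset α)
    (hF : (F : Set α) ⊆ fcl ψ S) :
    ∃ G : Finset α, (G : Set α) ⊆ S ∧ (F : Set α) ⊆ fcl ψ (G : Set α) :=
  finset_fcl ψ S F (hF.trans (fcl_finitary ψ S))

/-- a countable subset of `fcl ψ S` is contained in the closure of a countable subset of `S` -/
theorem countable_fcl {α : Type*} (ψ : Finset α → Set α) (S E : Set α) (hE : E.Countable)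
    (h : E ⊆ fcl ψ S) : ∃ D ⊆ S, D.Countable ∧ E ⊆ fcl ψ D := by
  have : ∀ x : E, ∃ G : Finset α, (G : Set α) ⊆ S ∧ x.1 ∈ fcl ψ (G : Set α) := by
    intro x
    obtain ⟨G, h1, h2⟩ := mem_iUnion₂.1 (fcl_finitary ψ S (h x.2))
    exact ⟨G, h1, h2⟩
  choose G h1 h2 using this
  have := hE.to_subtype
  refine ⟨⋃ x, (G x : Set α), iUnion_subset h1, countable_iUnion fun x => (G x).countable_toSet, ?_⟩
  intro x hx
  exact fcl_mono ψ (subset_iUnion (fun x => (G x : Set α)) ⟨x, hx⟩) (h2 ⟨x, hx⟩)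

theorem corson_to_mr {K : Type u} [TopologicalSpace K] [CompactSpace K] [T2Space K]
    (h : IsCorsonCompact K) : MonotonicallyRetractable K := by
  classical
  obtain ⟨Γ, f, hf, hinj, hsupp⟩ := h
  have hemb := (hf.isClosedEmbedding hinj)
  -- countable sets approximating finitely many coordinates
  have hD : ∀ F : Finset Γ, ∃ D : Set K, D.Countable ∧ ∀ x : K, ∀ u : Γ → Set ℝ,
      (∀ i ∈ F, IsOpen (u i) ∧ f x i ∈ u i) → ∃ d ∈ D, ∀ i ∈ F, f d i ∈ u i := by
    intro F
    let g : K → (F → ℝ) := fun x i => f x i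
    let t : TopologicalSpace K := TopologicalSpace.induced g inferInstance
    have : SecondCountableTopology K := TopologicalSpace.secondCountableTopology_induced K _ g
    obtain ⟨D, hDc, hDd⟩ := TopologicalSpace.exists_countable_dense K
    refine ⟨D, hDc, fun x u hu => ?_⟩
    have ho : IsOpen (g ⁻¹' (Set.univ.pi fun i : F => u i)) :=
      (isOpen_set_pi (s := fun i : F => u i) finite_univ fun i _ => (hu i i.2).1).preimage
        continuous_induced_dom
    obtain ⟨d, hd, hdD⟩ := hDd.exists_mem_open ho ⟨x, fun i _ => (hu i i.2).2⟩
    exact ⟨d, hd, fun i hi => hdD ⟨i, hi⟩ (mem_univ _)⟩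
  choose D hDc hDd using hD
  let supp : K → Set Γ := fun x => {γ | f x γ ≠ 0}
  let ψ : Finset Γ → Set Γ := fun F => ⋃ d ∈ D F, supp d
  have hψ : ∀ F, (ψ F).Countable := fun F => (hDc F).biUnion fun d _ => hsupp d
  let J : Set K → Set Γ := fun A => fcl ψ (⋃ a ∈ A, supp a)
  have hJc : ∀ A : Set K, A.Countable → (J A).Countable := fun A hA =>
    fcl_countable ψ hψ (hA.biUnion fun d _ => hsupp d)
  have hJm : ∀ A B : Set K, A ⊆ B → J A ⊆ J B := fun A B h =>
    fcl_mono ψ (biUnion_subset_biUnion_left h)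
  have hex : ∀ (A : Set K) (x : K), ∃ y, f y = (J A).indicator (f x) := by
    intro A x
    have hcl : IsClosed (range f) := hemb.isClosed_range
    change _ ∈ range f
    rw [← hcl.closure_eq, mem_closure_iff]
    intro V hV hxV
    obtain ⟨I, u, hu, hIV⟩ := isOpen_pi_iff.1 hV _ hxV
    let F := I.filter (· ∈ J A)
    have hF : (F : Set Γ) ⊆ J A := fun i hi => (Finset.mem_filter.1 hi).2
    obtain ⟨d, hd, hdu⟩ := hDd F x u (fun i hi => by
      have h1 := (Finset.mem_filter.1 hi)
      have := hu i h1.1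
      rw [indicator_of_mem h1.2] at this
      exact this)
    refine ⟨f d, hIV ?_, ⟨d, rfl⟩⟩
    intro i hi
    by_cases hiJ : i ∈ J A
    · exact hdu i (Finset.mem_filter.2 ⟨hi, hiJ⟩)
    · have h0 : f d i = 0 := by
        by_contra hne
        exact hiJ (fcl_closed ψ _ F hF (mem_iUnion₂.2 ⟨d, hd, hne⟩))
      have := (hu i hi).2
      rw [indicator_of_notMem hiJ] at this
      rw [h0]; exact this
  choose r hr using hex
  let S : Finset Γ → Set (Set K) := fun F =>
    range fun w : F → TopologicalSpace.countableBasis ℝ => {x : K | ∀ i : F, f x i ∈ (w i).1}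
  have hSc : ∀ F, (S F).Countable := by
    intro F
    have : Countable (TopologicalSpace.countableBasis ℝ) :=
      (TopologicalSpace.countable_countableBasis ℝ).to_subtype
    exact countable_range _
  have hSo : ∀ F, ∀ M ∈ S F, IsOpen M := by
    rintro F _ ⟨w, rfl⟩
    have : {x : K | ∀ i : F, f x i ∈ (w i).1} = ⋂ i : F, (fun x => f x i) ⁻¹' (w i).1 := by
      ext; simp
    change IsOpen {x : K | ∀ i : F, f x i ∈ (w i).1}
    rw [this]
    refine isOpen_iInter_of_finite fun i => ?_
    exact (TopologicalSpace.isOpen_of_mem_countableBasis (w i).2).preimage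
      ((continuous_apply _).comp hf)
  let N : Set K → Set (Set K) := fun A => ⋃ F ∈ {F : Finset Γ | (F : Set Γ) ⊆ J A}, S F
  have hNm : ∀ A B : Set K, A ⊆ B → N A ⊆ N B := fun A B h =>
    biUnion_subset_biUnion_left fun F hF => Subset.trans hF (hJm A B h)
  have hnet : ∀ A : Set K, ∀ U : Set K, IsOpen U → ∃ M ⊆ N A, (r A) ⁻¹' U = ⋃₀ M := by
    intro A U hU
    refine ⟨{M ∈ N A | M ⊆ (r A) ⁻¹' U}, fun M hM => hM.1, ?_⟩
    refine Subset.antisymm ?_ (sUnion_subset fun M hM => hM.2)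
    intro x hx
    obtain ⟨V, hV, rfl⟩ := hemb.isInducing.isOpen_iff.1 hU
    have hx' : (J A).indicator (f x) ∈ V := by rw [← hr]; exact hx
    obtain ⟨I, u, hu, hIV⟩ := isOpen_pi_iff.1 hV _ hx'
    let F := I.filter (· ∈ J A)
    have hF : (F : Set Γ) ⊆ J A := fun i hi => (Finset.mem_filter.1 hi).2
    have hb : ∀ i : F, ∃ v : TopologicalSpace.countableBasis ℝ, f x i ∈ v.1 ∧ v.1 ⊆ u i := by
      rintro ⟨i, hi⟩
      have h1 := (Finset.mem_filter.1 hi)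
      have := hu i h1.1
      rw [indicator_of_mem h1.2] at this
      obtain ⟨v, hv, h2, h3⟩ := (TopologicalSpace.isBasis_countableBasis ℝ).exists_subset_of_mem_open
        this.2 this.1
      exact ⟨⟨v, hv⟩, h2, h3⟩
    choose w hw1 hw2 using hb
    refine ⟨{x : K | ∀ i : F, f x i ∈ (w i).1}, ⟨mem_iUnion₂.2 ⟨F, hF, ⟨w, rfl⟩⟩, ?_⟩, hw1⟩
    intro z hz
    change f (r A z) ∈ V
    rw [hr]
    apply hIV
    intro i hi
    by_cases hiJ : i ∈ J A
    · rw [indicator_of_mem hiJ]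
      exact hw2 ⟨i, Finset.mem_filter.2 ⟨hi, hiJ⟩⟩ (hz _)
    · have := (hu i hi).2
      rw [indicator_of_notMem hiJ] at this ⊢
      exact this
  refine ⟨r, N, ⟨?_, fun A B _ _ h => hNm A B h, ?_⟩, ?_⟩
  · intro A hA
    exact (countable_finsets (hJc A hA)).biUnion fun F _ => hSc F
  · intro u _ hu
    have hmon : Monotone u := monotone_nat_of_le_succ hu
    refine Subset.antisymm ?_ (iUnion_subset fun n => hNm _ _ (subset_iUnion u n))
    have hJu : J (⋃ n, u n) ⊆ ⋃ n, J (u n) := by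
      refine fcl_min ψ ?_ ?_
      · refine iUnion₂_subset fun a ha => ?_
        obtain ⟨n, hn⟩ := mem_iUnion.1 ha
        refine Subset.trans ?_ (subset_iUnion (fun n => J (u n)) n)
        exact (subset_biUnion_of_mem (u := supp) hn).trans (subset_fcl ψ _)
      · intro F hF
        obtain ⟨n, hn⟩ := finset_dir (fun a b h => hJm _ _ (hmon h)) F hF
        exact (fcl_closed ψ _ F hn).trans (subset_iUnion (fun n => J (u n)) n)
    intro M hM
    obtain ⟨F, hF, hMF⟩ := mem_iUnion₂.1 hM
    obtain ⟨n, hn⟩ := finset_dir (fun a b h => hJm _ _ (hmon h)) F (Subset.trans hF hJu)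
    exact mem_iUnion.2 ⟨n, mem_iUnion₂.2 ⟨F, hn, hMF⟩⟩
  · intro A hA
    refine ⟨⟨fun U hU => ?_⟩, ?_, ?_, hnet A⟩
    · obtain ⟨M, hM, h⟩ := hnet A U hU
      rw [h]
      refine isOpen_sUnion fun m hm => ?_
      obtain ⟨F, _, hMF⟩ := mem_iUnion₂.1 (hM hm)
      exact hSo F m hMF
    · funext x
      apply hinj
      simp only [Function.comp, hr, indicator_indicator, inter_self]
    · intro a ha
      refine ⟨a, hinj ?_⟩
      rw [hr, indicator_eq_self]
      intro γ hγ
      exact subset_fcl ψ _ (mem_iUnion₂.2 ⟨a, ha, hγ⟩)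

theorem abstract_corson {K : Type u} [TopologicalSpace K] [CompactSpace K] [T2Space K]
    (T : Set K → Set K) (s : Set K → K → K)
    (Tm : Monotone T) (Tc : ∀ B, IsClosed (T B)) (Tsub : ∀ B, B ⊆ T B)
    (sc : ∀ D : Set K, D.Countable → Continuous (s D))
    (sT : ∀ D : Set K, D.Countable → ∀ x, s D x ∈ T D)
    (sid : ∀ D : Set K, D.Countable → ∀ x ∈ T D, s D x = x)
    (ss : ∀ D D' : Set K, D'.Countable → D ⊆ D' → ∀ x, s D (s D' x) = s D x)
    (sfin : ∀ D : Set K, D.Countable → ∀ u v,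
      (∀ F : Finset K, (F : Set K) ⊆ D → s F u = s F v) → s D u = s D v)
    (tight : ∀ B, ∀ y ∈ T B, ∃ D ⊆ B, D.Countable ∧ y ∈ T D)
    (base : ∀ D : Set K, D.Countable → ∃ G : Set C(K, ℝ), G.Countable ∧
      ∀ x ∈ T D, ∀ y ∈ T D, (∀ g ∈ G, g x = g y) → x = y) :
    IsCorsonCompact K := by
  classical
  have fc : ∀ F : Finset K, (F : Set K).Countable := fun F => F.countable_toSet
  have uniq : ∀ B : Set K, ∀ y ∈ T B, ∀ z ∈ T B,
      (∀ F : Finset K, (F : Set K) ⊆ B → s F y = s F z) → y = z := by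
    intro B y hy z hz h
    obtain ⟨D1, h1, c1, hy⟩ := tight B y hy
    obtain ⟨D2, h2, c2, hz⟩ := tight B z hz
    have c := c1.union c2
    rw [← sid _ c y (Tm subset_union_left hy), ← sid _ c z (Tm subset_union_right hz)]
    exact sfin _ c _ _ fun F hF => h F (hF.trans (union_subset h1 h2))
  have exi : ∀ (B : Set K) (x : K), ∃ y ∈ T B, ∀ F : Finset K, (F : Set K) ⊆ B → s F y = s F x := by
    intro B x
    let ι := {F : Finset K // (F : Set K) ⊆ B}
    let t : ι → Set K := fun F => {y | y ∈ T B ∧ s (F.1 : Set K) y = s (F.1 : Set K) x}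
    have hcl : ∀ i, IsClosed (t i) := fun i =>
      (Tc B).inter (isClosed_eq (sc _ (fc _)) continuous_const)
    have hne : Nonempty ι := ⟨⟨∅, by simp⟩⟩
    obtain ⟨y, hy⟩ := IsCompact.nonempty_iInter_of_directed_nonempty_isCompact_isClosed t
      (by
        rintro ⟨F, hF⟩ ⟨G, hG⟩
        have hFG : ((F ∪ G : Finset K) : Set K) ⊆ B := by
          rw [Finset.coe_union]; exact union_subset hF hG
        refine ⟨⟨F ∪ G, hFG⟩, ?_, ?_⟩
        · rintro y ⟨hy, h⟩
          refine ⟨hy, ?_⟩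
          have hs : (F : Set K) ⊆ ((F ∪ G : Finset K) : Set K) := by simp
          change s F y = s F x
          rw [← ss _ _ (fc _) hs y, ← ss _ _ (fc _) hs x]
          exact congrArg _ h
        · rintro y ⟨hy, h⟩
          refine ⟨hy, ?_⟩
          have hs : (G : Set K) ⊆ ((F ∪ G : Finset K) : Set K) := by simp
          change s G y = s G x
          rw [← ss _ _ (fc _) hs y, ← ss _ _ (fc _) hs x]
          exact congrArg _ h)
      (fun i => ⟨s i.1 x, Tm i.2 (sT _ (fc _) x), ss _ _ (fc _) Subset.rfl x⟩)
      (fun i => (hcl i).isCompact) hcl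
    rw [mem_iInter] at hy
    exact ⟨y, (hy hne.some).1, fun F hF => (hy ⟨F, hF⟩).2⟩
  choose R RT Rs using exi
  have Rid : ∀ B, ∀ x ∈ T B, R B x = x := fun B x hx =>
    uniq B _ (RT B x) _ hx (Rs B x)
  have RR : ∀ B B', B ⊆ B' → ∀ x, R B (R B' x) = R B x := by
    intro B B' h x
    refine uniq B _ (RT _ _) _ (RT _ _) fun F hF => ?_
    rw [Rs B _ F hF, Rs B' _ F (hF.trans h), Rs B _ F hF]
  have Rc : ∀ B, Continuous (R B) := by
    intro B
    let Gr : Set (K × K) := {p | p.2 ∈ T B ∧ ∀ F : Finset K, (F : Set K) ⊆ B → s F p.2 = s F p.1}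
    have hGr : IsClosed Gr := by
      have : Gr = (Prod.snd ⁻¹' T B) ∩ ⋂ F : Finset K, ⋂ (_ : (F : Set K) ⊆ B),
          {p : K × K | s F p.2 = s F p.1} := by
        ext p; simp [Gr]
      rw [this]
      refine ((Tc B).preimage continuous_snd).inter (isClosed_iInter fun F => isClosed_iInter fun _ => ?_)
      exact isClosed_eq ((sc _ (fc F)).comp continuous_snd) ((sc _ (fc F)).comp continuous_fst)
    rw [continuous_iff_isClosed]
    intro Z hZ
    have : R B ⁻¹' Z = Prod.fst '' (Gr ∩ Prod.snd ⁻¹' Z) := by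
      ext x
      constructor
      · intro hx
        exact ⟨(x, R B x), ⟨⟨RT B x, Rs B x⟩, hx⟩, rfl⟩
      · rintro ⟨⟨x', y⟩, ⟨⟨h1, h2⟩, h3⟩, rfl⟩
        have : R B x' = y := uniq B _ (RT _ _) _ h1 fun F hF => by rw [Rs B _ F hF, h2 F hF]
        change R B x' ∈ Z
        rw [this]; exact h3
    rw [this]
    exact isClosedMap_fst_of_compactSpace _ (hGr.inter (hZ.preimage continuous_snd))
  -- the induction on the cardinality
  have main : ∀ (κ : Cardinal.{u}) (B : Set K), Cardinal.mk B = κ → ∃ G : Set C(K, ℝ),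
      (∀ x, {g ∈ G | g x ≠ 0}.Countable) ∧
      ∀ x ∈ T B, ∀ y ∈ T B, (∀ g ∈ G, g x = g y) → x = y := by
    intro κ
    induction κ using WellFoundedLT.induction with
    | ind κ ih =>
    intro B hB
    by_cases hBc : B.Countable
    · obtain ⟨G, hG, h⟩ := base B hBc
      exact ⟨G, fun x => hG.mono fun g hg => hg.1, h⟩
    have hκ : Cardinal.aleph0 ≤ κ := by
      rw [← hB]
      by_contra hlt
      have hfin : Finite B := Cardinal.mk_lt_aleph0_iff.1 (not_le.1 hlt)
      exact hBc (Set.to_countable B)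
    let ι : Type u := κ.ord.ToType
    have hι : Cardinal.mk ι = κ := Cardinal.mk_ord_toType κ
    obtain ⟨eqv⟩ := Cardinal.eq.1 (hι.trans hB.symm)
    let e : ι → K := fun i => (eqv i).1
    have he : range e = B := by
      ext x
      constructor
      · rintro ⟨i, rfl⟩
        exact (eqv i).2
      · intro hx
        exact ⟨eqv.symm ⟨x, hx⟩, by simp [e]⟩
    have hlt : ∀ i : ι, Cardinal.mk (e '' Iic i) < κ := by
      intro i
      have h1 : Cardinal.mk (Iio i) < κ := by
        have h2 := Cardinal.mk_Iio_lt i (by rw [hι]; simp [ι])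
        exact h2.trans_eq hι
      refine Cardinal.mk_image_le.trans_lt ?_
      rw [← Iio_insert]
      refine Cardinal.mk_insert_le.trans_lt ?_
      exact Cardinal.add_lt_of_lt hκ h1 (Cardinal.one_lt_aleph0.trans_le hκ)
    have hG : ∀ i : ι, ∃ G : Set C(K, ℝ), (∀ x, {g ∈ G | g x ≠ 0}.Countable) ∧
      ∀ x ∈ T (e '' Iic i), ∀ y ∈ T (e '' Iic i), (∀ g ∈ G, g x = g y) → x = y :=
      fun i => ih _ (hlt i) _ rfl
    choose G Gc Gs using hG
    obtain ⟨G0, G0c, G0s⟩ := base ∅ countable_empty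
    let ρ : Set K → C(K, K) := fun B => ⟨R B, Rc B⟩
    let Δ : ι → C(K, ℝ) → C(K, ℝ) := fun i g =>
      g.comp (ρ (e '' Iic i)) - g.comp (ρ (e '' Iio i))
    have jump : ∀ x, {i : ι | R (e '' Iic i) x ≠ R (e '' Iio i) x}.Countable := by
      intro x
      set S := {i : ι | R (e '' Iic i) x ≠ R (e '' Iio i) x} with hS
      have step : ∀ I : Set ι, (∀ j ∈ I, Iic j ⊆ I) → (∀ j ∈ I, (S ∩ Iic j).Countable) →
          (S ∩ I).Countable := by
        intro I hI hc
        by_contra hnc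
        obtain ⟨D, hD, Dc, hy⟩ := tight _ _ (RT (e '' I) x)
        obtain ⟨E, hE, hED⟩ := subset_image_iff.1 hD
        have einj : Function.Injective e := fun a b h => eqv.injective (Subtype.ext h)
        have Ec : E.Countable := by
          rw [← hED] at Dc
          exact countable_of_injective_of_countable_image einj.injOn Dc
        have hcc : (⋃ j ∈ E, S ∩ Iic j).Countable := Ec.biUnion fun j hj => hc j (hE hj)
        obtain ⟨k, ⟨hkS, hkI⟩, hk⟩ : ∃ k ∈ S ∩ I, k ∉ ⋃ j ∈ E, S ∩ Iic j := by
          by_contra hcon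
          push Not at hcon
          exact hnc (hcc.mono hcon)
        have hEk : E ⊆ Iio k := by
          intro j hj
          by_contra hjk
          exact hk (mem_iUnion₂.2 ⟨j, hj, hkS, mem_Iic.2 (not_lt.1 (fun h => hjk (mem_Iio.2 h)))⟩)
        have hy1 : R (e '' I) x ∈ T (e '' Iio k) := Tm (by
          rw [← hED]; exact image_mono hEk) hy
        have hy2 : R (e '' I) x ∈ T (e '' Iic k) := Tm (image_mono Iio_subset_Iic_self) hy1
        apply hkS
        have hk1 : e '' Iic k ⊆ e '' I := image_mono (hI k hkI)
        have hk2 : e '' Iio k ⊆ e '' I := (image_mono Iio_subset_Iic_self).trans hk1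
        rw [← RR _ _ hk1 x, ← RR _ _ hk2 x, Rid _ _ hy1, Rid _ _ hy2]
      have hIic : ∀ j : ι, (S ∩ Iic j).Countable := by
        intro j
        induction j using WellFoundedLT.induction with
        | ind j ihj =>
        have := step (Iio j) (fun i hi => Iic_subset_Iio.2 hi) (fun i hi => ihj i hi)
        refine (this.insert j).mono ?_
        rintro i ⟨hi, hij⟩
        rcases eq_or_lt_of_le (show i ≤ j from hij) with h | h
        · exact Or.inl h
        · exact Or.inr ⟨hi, h⟩
      have := step univ (fun j _ => subset_univ _) (fun j _ => hIic j)
      rwa [inter_univ] at this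
    refine ⟨(fun g : C(K, ℝ) => g.comp (ρ ∅)) '' G0 ∪ ⋃ i, Δ i '' G i, ?_, ?_⟩
    · intro x
      have hc : ((fun g : C(K, ℝ) => g.comp (ρ ∅)) '' G0 ∪
          ⋃ i ∈ {i : ι | R (e '' Iic i) x ≠ R (e '' Iio i) x},
            Δ i '' ({g ∈ G i | g (R (e '' Iic i) x) ≠ 0} ∪ {g ∈ G i | g (R (e '' Iio i) x) ≠ 0})).Countable :=
        (G0c.image _).union ((jump x).biUnion fun i _ => ((Gc i _).union (Gc i _)).image _)
      refine hc.mono ?_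
      rintro h ⟨hh | hh, hx⟩
      · exact Or.inl hh
      · right
        obtain ⟨i, g, hg, rfl⟩ := mem_iUnion.1 hh
        have hx' : g (R (e '' Iic i) x) - g (R (e '' Iio i) x) ≠ 0 := hx
        refine mem_iUnion₂.2 ⟨i, ?_, g, ?_, rfl⟩
        · intro heq
          rw [heq, sub_self] at hx'
          exact hx' rfl
        · by_cases h0 : g (R (e '' Iic i) x) = 0
          · right
            refine ⟨hg, fun h1 => hx' ?_⟩
            rw [h0, h1, sub_self]
          · exact Or.inl ⟨hg, h0⟩
    · intro x hx y hy hxy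
      have h0 : R ∅ x = R ∅ y := G0s _ (RT _ _) _ (RT _ _) fun g hg =>
        hxy (g.comp (ρ ∅)) (Or.inl ⟨g, hg, rfl⟩)
      have step : ∀ I : Set ι, (∀ j ∈ I, R (e '' Iic j) x = R (e '' Iic j) y) →
          R (e '' I) x = R (e '' I) y := by
        intro I hI
        refine uniq _ _ (RT _ _) _ (RT _ _) fun F hF => ?_
        rw [Rs _ _ F hF, Rs _ _ F hF]
        obtain ⟨E, hE, hEF⟩ := Finset.subset_set_image_iff.1 hF
        rcases E.eq_empty_or_nonempty with hemp | hne
        · have hF0 : (F : Set K) ⊆ ∅ := by rw [← hEF, hemp]; simp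
          rw [← Rs ∅ x F hF0, ← Rs ∅ y F hF0, h0]
        · have hFm : (F : Set K) ⊆ e '' Iic (E.max' hne) := by
            rw [← hEF, Finset.coe_image]
            exact image_mono fun i hi => E.le_max' i hi
          rw [← Rs _ x F hFm, ← Rs _ y F hFm, hI _ (hE (E.max'_mem hne))]
      have hall : ∀ i : ι, R (e '' Iic i) x = R (e '' Iic i) y := by
        intro i
        induction i using WellFoundedLT.induction with
        | ind i ihi =>
        have h1 := step (Iio i) (fun j hj => ihi j hj)
        refine Gs i _ (RT _ _) _ (RT _ _) fun g hg => ?_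
        have h2 : g (R (e '' Iic i) x) - g (R (e '' Iio i) x) =
          g (R (e '' Iic i) y) - g (R (e '' Iio i) y) :=
          hxy (Δ i g) (Or.inr (mem_iUnion.2 ⟨i, g, hg, rfl⟩))
        rw [h1] at h2
        exact sub_left_injective h2
      have hfin := step univ (fun j _ => hall j)
      rw [image_univ, he, Rid _ _ hx, Rid _ _ hy] at hfin
      exact hfin
  obtain ⟨G, Gc, Gs⟩ := main _ univ rfl
  refine ⟨G, fun x g => g.1 x, continuous_pi fun g => g.1.continuous, ?_, ?_⟩
  · intro x y hxy
    exact Gs x (Tsub _ (mem_univ _)) y (Tsub _ (mem_univ _)) fun g hg => congrFun hxy ⟨g, hg⟩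
  · intro x
    have hc : ((Subtype.val : G → C(K, ℝ)) ⁻¹' {g | g ∈ G ∧ g x ≠ 0}).Countable :=
      (Gc x).preimage_of_injOn Subtype.val_injective.injOn
    refine hc.mono ?_
    intro g hg
    exact And.intro g.2 hg

theorem mr_to_corson {K : Type u} [TopologicalSpace K] [CompactSpace K] [T2Space K]
    (h : MonotonicallyRetractable K) : IsCorsonCompact K := by
  classical
  obtain ⟨r, N, ⟨Nc, Nm, Nu⟩, hr⟩ := h
  have fc : ∀ F : Finset K, (F : Set K).Countable := fun F => F.countable_toSet
  have net : ∀ A : Set K, A.Countable → ∀ x, ∀ U : Set K, IsOpen U → r A x ∈ U →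
      ∃ M ∈ N A, x ∈ M ∧ ∀ z ∈ M, r A z ∈ U := by
    intro A hA x U hU hx
    obtain ⟨𝓜, h1, h2⟩ := (hr A hA).2.2.2 U hU
    have hx' : x ∈ ⋃₀ 𝓜 := by rw [← h2]; exact hx
    obtain ⟨M, hM, hxM⟩ := hx'
    refine ⟨M, h1 hM, hxM, fun z hz => ?_⟩
    have : z ∈ r A ⁻¹' U := by rw [h2]; exact ⟨M, hM, hz⟩
    exact this
  have rcont : ∀ A : Set K, A.Countable → Continuous (r A) := fun A hA => (hr A hA).1
  have rfix : ∀ A : Set K, A.Countable → ∀ a ∈ A, r A a = a := by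
    intro A hA a ha
    obtain ⟨b, rfl⟩ := (hr A hA).2.2.1 ha
    exact congrFun (hr A hA).2.1 b
  have rfixc : ∀ A : Set K, A.Countable → ∀ a ∈ closure A, r A a = a := by
    intro A hA a ha
    have hcl : IsClosed {a | r A a = a} := isClosed_eq (rcont A hA) continuous_id
    exact closure_minimal (rfix A hA) hcl ha
  have Nfin : ∀ A : Set K, A.Countable → ∀ M ∈ N A, ∃ F : Finset K, (F : Set K) ⊆ A ∧ M ∈ N F := by
    intro A hA M hM
    obtain ⟨f, hf⟩ := Set.countable_iff_exists_injOn.1 hA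
    let u : ℕ → Set K := fun n => {x ∈ A | f x < n}
    have ufin : ∀ n, (u n).Finite := fun n =>
      Set.Finite.of_finite_image ((Set.finite_Iio n).subset (by
        rintro _ ⟨x, hx, rfl⟩
        exact hx.2)) (hf.mono fun x hx => hx.1)
    have hu : ⋃ n, u n = A := by
      ext x
      simp only [mem_iUnion]
      exact ⟨fun ⟨n, hn⟩ => hn.1, fun hx => ⟨f x + 1, hx, Nat.lt_succ_self _⟩⟩
    have := Nu u (fun n => (ufin n).countable) (fun n x hx => ⟨hx.1, Nat.lt_succ_of_lt hx.2⟩)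
    rw [hu] at this
    rw [this] at hM
    obtain ⟨n, hn⟩ := mem_iUnion.1 hM
    exact ⟨(ufin n).toFinset, by
      rw [Set.Finite.coe_toFinset]; exact fun x hx => hx.1, by simpa using hn⟩
  let ψ : Finset K → Set K := fun F => ⋃ M ∈ N F, ⋃ M' ∈ N F,
    {x | ∃ h : (M ∩ M').Nonempty, x = h.some}
  have hψ : ∀ F, (ψ F).Countable := by
    intro F
    refine (Nc _ (fc F)).biUnion fun M _ => (Nc _ (fc F)).biUnion fun M' _ => ?_
    refine Set.Subsingleton.countable ?_
    rintro _ ⟨h, rfl⟩ _ ⟨h', rfl⟩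
    rfl
  let c : Set K → Set K := fcl ψ
  have cc : ∀ D : Set K, D.Countable → (c D).Countable := fun D hD => fcl_countable ψ hψ hD
  have cm : ∀ D D' : Set K, D ⊆ D' → c D ⊆ c D' := fun D D' h => fcl_mono ψ h
  -- two members of `N (c D)` lie in `N F` for a common finite `F ⊆ c D`
  have Nfin2 : ∀ D : Set K, D.Countable → ∀ M ∈ N (c D), ∀ M' ∈ N (c D),
      ∃ F : Finset K, (F : Set K) ⊆ c D ∧ M ∈ N F ∧ M' ∈ N F := by
    intro D hD M hM M' hM'
    obtain ⟨F, hF, h1⟩ := Nfin _ (cc D hD) M hM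
    obtain ⟨F', hF', h2⟩ := Nfin _ (cc D hD) M' hM'
    refine ⟨F ∪ F', by rw [Finset.coe_union]; exact union_subset hF hF', ?_, ?_⟩
    · exact Nm _ _ (fc _) (fc _) (by simp) h1
    · exact Nm _ _ (fc _) (fc _) (by simp) h2
  have pick : ∀ D : Set K, D.Countable → ∀ M ∈ N (c D), ∀ M' ∈ N (c D), (M ∩ M').Nonempty →
      ∃ p ∈ c D, p ∈ M ∧ p ∈ M' := by
    intro D hD M hM M' hM' hne
    obtain ⟨F, hF, h1, h2⟩ := Nfin2 D hD M hM M' hM'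
    refine ⟨hne.some, fcl_closed ψ D F hF ?_, hne.some_mem.1, hne.some_mem.2⟩
    exact mem_iUnion₂.2 ⟨M, h1, mem_iUnion₂.2 ⟨M', h2, hne, rfl⟩⟩
  have key : ∀ D D' : Set K, D'.Countable → D ⊆ D' → ∀ x, ∀ U : Set K, ∀ M ∈ N (c D), x ∈ M →
      (∀ z ∈ M, r (c D') z ∈ U) → r (c D) x ∈ closure U := by
    intro D D' hD' hDD x U M hM hxM hMU
    have hD := hD'.mono hDD
    rw [mem_closure_iff]
    intro W hW hxW
    obtain ⟨M', hM', hx', hMW⟩ := net _ (cc D hD) x W hW hxW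
    obtain ⟨p, hp, hp1, hp2⟩ := pick D hD M hM M' hM' ⟨x, hxM, hx'⟩
    have e1 := hMW p hp2
    have e2 := hMU p hp1
    rw [rfix _ (cc D hD) p hp] at e1
    rw [rfix _ (cc D' hD') p (cm _ _ hDD hp)] at e2
    exact ⟨p, e1, e2⟩
  refine abstract_corson (fun B => closure (c B)) (fun D => r (c D))
    (fun A B h => closure_mono (cm A B h)) (fun B => isClosed_closure)
    (fun B => (subset_fcl ψ B).trans subset_closure)
    (fun D hD => rcont _ (cc D hD)) ?_ (fun D hD => rfixc _ (cc D hD)) ?_ ?_ ?_ ?_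
  · intro D hD x
    rw [mem_closure_iff]
    intro U hU hx
    obtain ⟨M, hM, hxM, hMU⟩ := net _ (cc D hD) x U hU hx
    obtain ⟨p, hp, hp1, _⟩ := pick D hD M hM M hM ⟨x, hxM, hxM⟩
    have := hMU p hp1
    rw [rfix _ (cc D hD) p hp] at this
    exact ⟨p, this, hp⟩
  · intro D D' hD' hDD x
    have hD := hD'.mono hDD
    by_contra hne
    obtain ⟨V, U, hV, hU, hxV, hxU, hdis⟩ := t2_separation hne
    obtain ⟨M, hM, hxM, hMU⟩ := net _ (cc D hD) x U hU hxU
    obtain ⟨M', hM', hxM', hMV⟩ := net _ (cc D' hD') x _ (hV.preimage (rcont _ (cc D hD))) hxV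
    obtain ⟨p, hp, hp1, hp2⟩ := pick D' hD' M
      (Nm _ _ (cc D hD) (cc D' hD') (cm _ _ hDD) hM) M' hM' ⟨x, hxM, hxM'⟩
    have e1 := hMU p hp1
    have e2 : r (c D) (r (c D') p) ∈ V := hMV p hp2
    rw [rfix _ (cc D' hD') p hp] at e2
    exact disjoint_left.1 hdis e2 e1
  · intro D hD u v huv
    by_contra hne
    obtain ⟨U, huU, hU, V, hvV, hV, hdis⟩ := exists_open_nhds_disjoint_closure hne
    obtain ⟨M, hM, huM, hMU⟩ := net _ (cc D hD) u U hU huU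
    obtain ⟨M', hM', hvM, hMV⟩ := net _ (cc D hD) v V hV hvV
    obtain ⟨F, hF, h1, h2⟩ := Nfin2 D hD M hM M' hM'
    obtain ⟨G, hG, hFG⟩ := finset_fcl' ψ D F hF
    have e1 := key G D hD hG u U M (Nm _ _ (fc F) (cc G (fc G)) hFG h1) huM hMU
    have e2 := key G D hD hG v V M' (Nm _ _ (fc F) (cc G (fc G)) hFG h2) hvM hMV
    have e3 : r (c G) u = r (c G) v := huv G hG
    rw [e3] at e1
    exact disjoint_left.1 hdis e1 e2
  · intro B y hy
    let φ : Finset K → Set K := fun F => ⋃ M ∈ N F, {x | ∃ h : (M ∩ c B).Nonempty, x = h.some}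
    have hφ : ∀ F, (φ F).Countable := by
      intro F
      refine (Nc _ (fc F)).biUnion fun M _ => ?_
      refine Set.Subsingleton.countable ?_
      rintro _ ⟨h, rfl⟩ _ ⟨h', rfl⟩
      rfl
    let E := fcl φ {y}
    have Ec : E.Countable := fcl_countable φ hφ (countable_singleton y)
    have hyE : y ∈ E := subset_fcl φ _ rfl
    have hyc : y ∈ closure (c B ∩ E) := by
      rw [mem_closure_iff]
      intro U hU hyU
      have hyU' : y ∈ r E ⁻¹' U := by
        change r E y ∈ U
        rw [rfix E Ec y hyE]; exact hyU
      obtain ⟨a, haU, haB⟩ := mem_closure_iff.1 hy _ (hU.preimage (rcont E Ec)) hyU'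
      obtain ⟨M, hM, haM, hMU⟩ := net E Ec a U hU haU
      obtain ⟨F, hF, hMF⟩ := Nfin E Ec M hM
      have hne : (M ∩ c B).Nonempty := ⟨a, haM, haB⟩
      have hpE : hne.some ∈ E :=
        fcl_closed φ _ F hF (mem_iUnion₂.2 ⟨M, hMF, hne, rfl⟩)
      have := hMU _ hne.some_mem.1
      rw [rfix E Ec _ hpE] at this
      exact ⟨_, this, hne.some_mem.2, hpE⟩
    obtain ⟨D, hDB, hDc, hD⟩ := countable_fcl ψ B (c B ∩ E) (Ec.mono inter_subset_right)
      inter_subset_left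
    exact ⟨D, hDB, hDc, closure_mono hD hyc⟩
  · intro D hD
    let Q : Set K → Set K → C(K, ℝ) → Prop := fun M M' g =>
      (∀ z ∈ M, g (r (c D) z) = 0) ∧ (∀ z ∈ M', g (r (c D) z) = 1)
    have NDc := Nc _ (cc D hD)
    refine ⟨⋃ M ∈ N (c D), ⋃ M' ∈ N (c D), {g | ∃ h : (∃ g, Q M M' g), g = h.choose}, ?_, ?_⟩
    · refine NDc.biUnion fun M _ => NDc.biUnion fun M' _ => ?_
      refine Set.Subsingleton.countable ?_
      rintro _ ⟨h, rfl⟩ _ ⟨h', rfl⟩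
      rfl
    · intro u hu v hv hg
      by_contra hne
      have eu := rfixc _ (cc D hD) u hu
      have ev := rfixc _ (cc D hD) v hv
      obtain ⟨U, huU, hU, V, hvV, hV, hdis⟩ := exists_open_nhds_disjoint_closure hne
      obtain ⟨M, hM, huM, hMU⟩ := net _ (cc D hD) u U hU (by rw [eu]; exact huU)
      obtain ⟨M', hM', hvM, hMV⟩ := net _ (cc D hD) v V hV (by rw [ev]; exact hvV)
      obtain ⟨g, g0, g1, _⟩ := exists_continuous_zero_one_of_isClosed
        isClosed_closure isClosed_closure hdis
      have hQ : ∃ g, Q M M' g := ⟨g, fun z hz => g0 (subset_closure (hMU z hz)),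
        fun z hz => g1 (subset_closure (hMV z hz))⟩
      have e := hg hQ.choose (mem_iUnion₂.2 ⟨M, hM, mem_iUnion₂.2 ⟨M', hM', hQ, rfl⟩⟩)
      have e0 := hQ.choose_spec.1 u huM
      have e1 := hQ.choose_spec.2 v hvM
      rw [eu] at e0
      rw [ev] at e1
      rw [e0, e1] at e
      exact zero_ne_one e

end

theorem compact_monotonicallyRetractable_iff_corson
    (K : Type u) [TopologicalSpace K] [CompactSpace K] [T2Space K] :
    MonotonicallyRetractable K ↔ IsCorsonCompact K :=
  ⟨mr_to_corson, corson_to_mr⟩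
end
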